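/- Let C be a 2-torsion free commutative ring with unity 1 ≠ 0, let n ≥ 2, and let M_n(C) be the algebra of all n×n matrices over C. Then every Jordan {g,h}-derivation f : M_n(C) → M_n(C) (with C-linear maps g, h : M_n(C) → M_n(C)) is a {g,h}-derivation, i.e. if f(x∘y) = g(x)∘y + x∘h(y) for all x, y ∈ M_n(C), then f(xy) = g(x)y + x·h(y) = h(x)y + x·g(y) for all x, y ∈ M_n(C). -/

import Mathlib

/-!
Evaluating the Jordan identity at `1` determines `g` and `h` from `f`, `g 1` and `h 1`. Comparing
the identity for `(x, y)` and `(y, x)` shows that `g 1 - h 1` commutes with all commutators, and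
the identity at an idempotent `e` shows that `g 1 + h 1` commutes with `e`. Off-diagonal
multiples `r eᵢⱼ` of matrix units are both commutators and differences of idempotents, so over
matrices `g 1` and `h 1` are central. Subtracting multiplication by `g 1 + h 1`, `g 1` and `h 1`
then turns `f`, `g` and `h` into one and the same Jordan derivation `d`.

After a further subtraction of an inner derivation, `d` kills every `eᵢᵢ`. The Jordan identity now
forces `d (r eᵢⱼ) = αᵢⱼ(r) eᵢⱼ`, so that the Leibniz rule amounts to
`αᵢₖ(r s) = αᵢⱼ(r) s + r αⱼₖ(s)`. The Jordan identity gives this unless `i = j = k`; in that case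
expand `αᵢₗ((r s) 1) = αᵢₗ(r (s 1))` in two ways for some `l ≠ i`.
-/

section Definitions

variable {A : Type*} [NonUnitalNonAssocSemiring A]

/-- An additive `{g, h}`-derivation. For `f = g = h` this is a derivation. -/
def IsGHDerivation (f g h : A →+ A) : Prop :=
  ∀ x y, f (x * y) = g x * y + x * h y ∧ f (x * y) = h x * y + x * g y

/-- An additive Jordan `{g, h}`-derivation, with the Jordan products `x ∘ y = x * y + y * x`
written out. For `f = g = h` this is a Jordan derivation. -/
def IsJordanGHDerivation (f g h : A →+ A) : Prop :=
  ∀ x y, f (x * y + y * x) = (g x * y + y * g x) + (x * h y + h y * x)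

theorem IsGHDerivation.add {f g h f' g' h' : A →+ A} (H : IsGHDerivation f g h)
    (H' : IsGHDerivation f' g' h') : IsGHDerivation (f + f') (g + g') (h + h') := by
  intro x y
  simp only [AddMonoidHom.add_apply, add_mul, mul_add]
  constructor
  · rw [(H x y).1, (H' x y).1]
    abel
  · rw [(H x y).2, (H' x y).2]
    abel

theorem IsGHDerivation.isJordanGHDerivation {f g h : A →+ A} (H : IsGHDerivation f g h) :
    IsJordanGHDerivation f g h := by
  intro x y
  rw [map_add, (H x y).1, (H y x).2]
  abel

theorem IsJordanGHDerivation.symm {f g h : A →+ A} (H : IsJordanGHDerivation f g h) :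
    IsJordanGHDerivation f h g := by
  intro x y
  rw [add_comm, H y x]
  abel

end Definitions

theorem IsJordanGHDerivation.sub {A : Type*} [NonUnitalNonAssocRing A] {f g h f' g' h' : A →+ A}
    (H : IsJordanGHDerivation f g h) (H' : IsJordanGHDerivation f' g' h') :
    IsJordanGHDerivation (f - f') (g - g') (h - h') := by
  intro x y
  simp only [AddMonoidHom.sub_apply, H x y, H' x y, sub_mul, mul_sub]
  abel

section NonUnitalRing

variable {A : Type*} [NonUnitalRing A]

/-- The inner derivation `x ↦ u * x - x * u`. -/
def innerDerivation (u : A) : A →+ A :=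
  AddMonoidHom.mulLeft u - AddMonoidHom.mulRight u

theorem innerDerivation_apply (u x : A) : innerDerivation u x = u * x - x * u := rfl

theorem isGHDerivation_innerDerivation (u : A) :
    IsGHDerivation (innerDerivation u) (innerDerivation u) (innerDerivation u) := by
  intro x y
  simp only [innerDerivation_apply, sub_mul, mul_sub, mul_assoc]
  constructor <;> abel

theorem eq_mul_mul_of_two_nsmul_eq (htwo : IsSMulRegular A (2 : ℕ)) {e x : A}
    (he : IsIdempotentElem e) (hx : 2 • x = e * x + x * e) : x = e * x * e := by
  have hleft : e * x = e * x * e := by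
    have := congrArg (e * ·) hx
    simpa only [mul_smul_comm, two_nsmul, mul_add, ← mul_assoc, he.eq, add_right_inj] using this
  have hright : x * e = e * x * e := by
    have := congrArg (· * e) hx
    simpa only [smul_mul_assoc, two_nsmul, add_mul, mul_assoc, he.eq, add_left_inj] using this
  apply htwo
  change 2 • x = 2 • (e * x * e)
  rw [hx, two_nsmul, ← hleft, hright, ← hleft]

theorem eq_mul_mul_add_mul_mul_of_orthogonal {e e' x : A} (hee' : e * e' = 0) (he'e : e' * e = 0)
    (hx : x = e * x + x * e) (hx' : x = e' * x + x * e') : x = e * x * e' + e' * x * e := by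
  have hleft : e * x = e * x * e' := by
    simpa only [mul_add, ← mul_assoc, hee', zero_mul, zero_add] using congrArg (e * ·) hx'
  have hright : x * e = e' * x * e := by
    simpa only [add_mul, mul_assoc, he'e, mul_zero, add_zero] using congrArg (· * e) hx'
  rwa [← hleft, ← hright]

theorem IsJordanGHDerivation.map_of_isIdempotentElem {d : A →+ A} (hd : IsJordanGHDerivation d d d)
    (htwo : IsSMulRegular A (2 : ℕ)) {e : A} (he : IsIdempotentElem e) :
    d e = d e * e + e * d e := by
  apply htwo
  change 2 • d e = 2 • (d e * e + e * d e)
  have hjordan := hd e e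
  rw [he.eq, ← two_nsmul, map_nsmul] at hjordan
  rw [hjordan, two_nsmul, add_comm (e * d e)]

end NonUnitalRing

section Ring

variable {A : Type*} [Ring A] {f g h : A →+ A}

theorem isGHDerivation_mulLeft_of_mem_center {b c : A} (hb : b ∈ Subring.center A)
    (hc : c ∈ Subring.center A) :
    IsGHDerivation (.mulLeft (b + c)) (.mulLeft b) (.mulLeft c) := by
  intro x y
  have hbx : x * b = b * x := Subring.mem_center_iff.mp hb x
  have hcx : x * c = c * x := Subring.mem_center_iff.mp hc x
  simp only [AddMonoidHom.coe_mulLeft, ← mul_assoc, hbx, hcx, add_mul, true_and]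
  abel

namespace IsJordanGHDerivation

theorem two_nsmul_map_eq_left (H : IsJordanGHDerivation f g h) (x : A) :
    2 • f x = 2 • g x + (x * h 1 + h 1 * x) := by
  simpa only [two_nsmul, mul_one, one_mul, map_add] using H x 1

theorem two_nsmul_map_eq_right (H : IsJordanGHDerivation f g h) (x : A) :
    2 • f x = 2 • h x + (x * g 1 + g 1 * x) :=
  H.symm.two_nsmul_map_eq_left x

theorem commute_map_one_sub_map_one_commutator (H : IsJordanGHDerivation f g h) (x y : A) :
    Commute (g 1 - h 1) (x * y - y * x) := by
  have hdiff (z : A) : 2 • (g z - h z) = z * (g 1 - h 1) + (g 1 - h 1) * z := by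
    linear_combination (norm := noncomm_ring)
      H.two_nsmul_map_eq_right z - H.two_nsmul_map_eq_left z
  have hswap : (g x - h x) * y + y * (g x - h x) = (g y - h y) * x + x * (g y - h y) := by
    linear_combination (norm := noncomm_ring) H.symm x y - H x y
  have hjordan : (x * (g 1 - h 1) + (g 1 - h 1) * x) * y + y * (x * (g 1 - h 1) + (g 1 - h 1) * x)
      = (y * (g 1 - h 1) + (g 1 - h 1) * y) * x + x * (y * (g 1 - h 1) + (g 1 - h 1) * y) := by
    simpa only [← hdiff, smul_mul_assoc, mul_smul_comm, ← smul_add] using congrArg (2 • ·) hswap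
  rw [commute_iff_eq]
  linear_combination (norm := noncomm_ring) hjordan

theorem commute_map_one_add_map_one_of_isIdempotentElem (H : IsJordanGHDerivation f g h) {e : A}
    (he : IsIdempotentElem e) : Commute (g 1 + h 1) e := by
  set s := g 1 + h 1 with hs
  have hee : 4 • f e = 4 • (f e * e + e * f e) - (e * s + s * e) * e - e * (e * s + s * e) := by
    have hsum : 2 • (g e + h e) = 4 • f e - (e * s + s * e) := by
      linear_combination (norm := (rw [hs]; noncomm_ring))
        - H.two_nsmul_map_eq_left e - H.two_nsmul_map_eq_right e
    have hjordan : 2 • f e = (g e + h e) * e + e * (g e + h e) := by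
      have := H e e
      rw [he.eq, ← two_nsmul, map_nsmul] at this
      rw [this]
      noncomm_ring
    calc 4 • f e = 2 • (2 • f e) := by rw [smul_smul]; norm_num
      _ = (2 • (g e + h e)) * e + e * (2 • (g e + h e)) := by rw [hjordan]; noncomm_ring
      _ = _ := by rw [hsum]; noncomm_ring
  -- Multiplying by `e` gives `e * s = 4 • (e * f e * e) - 3 • (e * s * e) = s * e`.
  have hcancel (z : A) : e * (e * z) = e * z := by rw [← mul_assoc, he.eq]
  have hleft := congrArg (e * ·) hee
  have hright := congrArg (· * e) hee
  simp only [mul_add, add_mul, mul_sub, sub_mul, mul_assoc, smul_add, mul_smul_comm,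
    smul_mul_assoc, he.eq, hcancel] at hleft hright
  rw [commute_iff_eq]
  linear_combination (norm := noncomm_ring) hright - hleft

theorem eq_add_mulLeft (H : IsJordanGHDerivation f g h) (htwo : IsSMulRegular A (2 : ℕ))
    (hh : h 1 ∈ Subring.center A) : f = g + .mulLeft (h 1) := by
  ext x
  apply htwo
  change 2 • f x = 2 • (g x + h 1 * x)
  rw [H.two_nsmul_map_eq_left x, Subring.mem_center_iff.mp hh x, smul_add, two_nsmul (h 1 * x)]

theorem exists_eq_add_mulLeft (H : IsJordanGHDerivation f g h) (htwo : IsSMulRegular A (2 : ℕ))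
    (hg : g 1 ∈ Subring.center A) (hh : h 1 ∈ Subring.center A) :
    ∃ d : A →+ A, IsJordanGHDerivation d d d ∧
      ∃ b ∈ Subring.center A, ∃ c ∈ Subring.center A,
        f = d + .mulLeft (b + c) ∧ g = d + .mulLeft b ∧ h = d + .mulLeft c := by
  have hadd : AddMonoidHom.mulLeft (g 1 + h 1) = .mulLeft (g 1) + .mulLeft (h 1) :=
    map_add AddMonoidHom.mul (g 1) (h 1)
  have hgd : f - .mulLeft (g 1 + h 1) = g - .mulLeft (g 1) := by
    rw [sub_eq_sub_iff_add_eq_add, hadd, H.eq_add_mulLeft htwo hh]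
    abel
  have hhd : f - .mulLeft (g 1 + h 1) = h - .mulLeft (h 1) := by
    rw [sub_eq_sub_iff_add_eq_add, hadd, H.symm.eq_add_mulLeft htwo hg]
    abel
  refine ⟨f - .mulLeft (g 1 + h 1), ?_, g 1, hg, h 1, hh, (sub_add_cancel _ _).symm,
    eq_add_of_sub_eq hgd.symm, eq_add_of_sub_eq hhd.symm⟩
  have hsub := H.sub (isGHDerivation_mulLeft_of_mem_center hg hh).isJordanGHDerivation
  rwa [← hgd, ← hhd] at hsub

end IsJordanGHDerivation

end Ring

section Matrix

open Matrix

variable {ι R : Type*} [Fintype ι] [DecidableEq ι] [Ring R]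

theorem mem_center_of_commute_single [Nontrivial ι] {M : Matrix ι ι R}
    (hM : ∀ i j, i ≠ j → ∀ r, Commute M (single i j r)) : M ∈ Subring.center (Matrix ι ι R) := by
  rw [Subring.mem_center_iff]
  intro N
  refine (?_ : Commute N M).eq
  induction N using Matrix.induction_on' with
  | h_zero => exact Commute.zero_left M
  | h_add P Q hP hQ => exact hP.add_left hQ
  | h_std_basis i j r =>
    rcases ne_or_eq i j with hij | rfl
    · exact (hM i j hij r).symm
    · obtain ⟨l, hl⟩ := exists_ne i
      have hmul : single i l r * single l i 1 = single i i r := by simp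
      rw [← hmul]
      exact ((hM i l hl.symm r).mul_right (hM l i hl 1)).symm

theorem isIdempotentElem_single_one (i : ι) : IsIdempotentElem (single i i (1 : R)) := by
  simp [IsIdempotentElem]

theorem isIdempotentElem_single_one_add_single {i j : ι} (hij : i ≠ j) (r : R) :
    IsIdempotentElem (single i i 1 + single i j r) := by
  simp [IsIdempotentElem, mul_add, add_mul, hij.symm]

/-- The matrix whose inner derivation agrees with a Jordan derivation `d` on the diagonal matrix
units; its column `j` is column `j` of `d eⱼⱼ`. -/
def diagonalGenerator (d : Matrix ι ι R →+ Matrix ι ι R) : Matrix ι ι R :=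
  of fun i j ↦ d (single j j 1) i j

namespace IsJordanGHDerivation

variable {f g h d : Matrix ι ι R →+ Matrix ι ι R}

theorem map_one_sub_map_one_mem_center [Nontrivial ι] (H : IsJordanGHDerivation f g h) :
    g 1 - h 1 ∈ Subring.center (Matrix ι ι R) := by
  refine mem_center_of_commute_single fun i j hij r ↦ ?_
  have hcomm := H.commute_map_one_sub_map_one_commutator (single i i 1) (single i j r)
  simpa [hij.symm] using hcomm

theorem map_one_add_map_one_mem_center [Nontrivial ι] (H : IsJordanGHDerivation f g h) :
    g 1 + h 1 ∈ Subring.center (Matrix ι ι R) := by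
  refine mem_center_of_commute_single fun i j hij r ↦ ?_
  have hdiag := H.commute_map_one_add_map_one_of_isIdempotentElem
    (isIdempotentElem_single_one (R := R) i)
  have hrow := H.commute_map_one_add_map_one_of_isIdempotentElem
    (isIdempotentElem_single_one_add_single hij r)
  simpa using hrow.sub_right hdiag

theorem map_one_mem_center [Nontrivial ι] (H : IsJordanGHDerivation f g h)
    (htwo : IsSMulRegular R (2 : ℕ)) : g 1 ∈ Subring.center (Matrix ι ι R) := by
  have hdouble : 2 • g 1 ∈ Subring.center (Matrix ι ι R) := by
    have := add_mem H.map_one_add_map_one_mem_center H.map_one_sub_map_one_mem_center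
    rwa [add_add_sub_cancel, ← two_nsmul] at this
  rw [Subring.mem_center_iff] at hdouble ⊢
  intro M
  apply htwo.matrix
  simpa only [mul_smul_comm, smul_mul_assoc] using hdouble M

theorem map_single_self_one_apply_eq_neg (hd : IsJordanGHDerivation d d d)
    (htwo : IsSMulRegular R (2 : ℕ)) (i j : ι) :
    d (single j j 1) i j = - d (single i i 1) i j := by
  rcases eq_or_ne i j with rfl | hij
  · have hzero : d (single i i 1) i i = 0 := by
      simpa using congr_fun₂ (hd.map_of_isIdempotentElem htwo.matrix
        (isIdempotentElem_single_one i)) i i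
    rw [hzero, neg_zero]
  · apply eq_neg_of_add_eq_zero_right
    simpa [hij, hij.symm, eq_comm] using congr_fun₂ (hd (single i i 1) (single j j 1)) i j

theorem map_single_self_one_eq_innerDerivation (hd : IsJordanGHDerivation d d d)
    (htwo : IsSMulRegular R (2 : ℕ)) (i : ι) :
    d (single i i 1) = innerDerivation (diagonalGenerator d) (single i i 1) := by
  have hcol : diagonalGenerator d * single i i 1 = d (single i i 1) * single i i 1 := by
    ext p q
    rcases eq_or_ne q i with rfl | hq
    · simp [diagonalGenerator]
    · simp [hq]
  have hrow : single i i 1 * diagonalGenerator d = - (single i i 1 * d (single i i 1)) := by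
    ext p q
    rcases eq_or_ne p i with rfl | hp
    · simp [diagonalGenerator, hd.map_single_self_one_apply_eq_neg htwo p q]
    · simp [hp]
  rw [innerDerivation_apply, hcol, hrow, sub_neg_eq_add]
  exact hd.map_of_isIdempotentElem htwo.matrix (isIdempotentElem_single_one i)

theorem map_single_self (hd : IsJordanGHDerivation d d d) (htwo : IsSMulRegular R (2 : ℕ))
    (hdiag : ∀ i, d (single i i 1) = 0) (i : ι) (r : R) :
    d (single i i r) = single i i (d (single i i r) i i) := by
  have hdouble : 2 • d (single i i r)
      = single i i 1 * d (single i i r) + d (single i i r) * single i i 1 := by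
    rw [two_nsmul]
    simpa [hdiag] using hd (single i i 1) (single i i r)
  conv_lhs => rw [eq_mul_mul_of_two_nsmul_eq htwo.matrix (isIdempotentElem_single_one i) hdouble]
  simp

theorem map_single_apply_swap_eq_zero (hd : IsJordanGHDerivation d d d)
    (htwo : IsSMulRegular R (2 : ℕ)) {i j : ι} (hij : i ≠ j) (r : R) :
    d (single i j r) j i = 0 := by
  have hjordan (s : R) : d (single i j s) j i = - (s * d (single i j 1) j i) := by
    apply eq_neg_of_add_eq_zero_left
    simpa [hij, hij.symm, eq_comm] using congr_fun₂ (hd (single i j s) (single i j 1)) i i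
  have hone : d (single i j 1) j i = 0 := by
    apply htwo.right_eq_zero_of_smul
    rw [two_nsmul]
    nth_rw 1 [hjordan, one_mul, neg_add_cancel]
  rw [hjordan, hone, mul_zero, neg_zero]

theorem map_single_of_ne (hd : IsJordanGHDerivation d d d) (htwo : IsSMulRegular R (2 : ℕ))
    (hdiag : ∀ i, d (single i i 1) = 0) {i j : ι} (hij : i ≠ j) (r : R) :
    d (single i j r) = single i j (d (single i j r) i j) := by
  have hrow : d (single i j r)
      = single i i 1 * d (single i j r) + d (single i j r) * single i i 1 := by
    simpa [hdiag, hij.symm] using hd (single i i 1) (single i j r)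
  have hcol : d (single i j r)
      = single j j 1 * d (single i j r) + d (single i j r) * single j j 1 := by
    simpa [hdiag, hij.symm] using hd (single j j 1) (single i j r)
  conv_lhs =>
    rw [eq_mul_mul_add_mul_mul_of_orthogonal (by simp [hij]) (by simp [hij.symm]) hrow hcol]
  simp [hd.map_single_apply_swap_eq_zero htwo hij r]

theorem map_single (hd : IsJordanGHDerivation d d d) (htwo : IsSMulRegular R (2 : ℕ))
    (hdiag : ∀ i, d (single i i 1) = 0) (i j : ι) (r : R) :
    d (single i j r) = single i j (d (single i j r) i j) := by
  rcases eq_or_ne i j with rfl | hij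
  · exact hd.map_single_self htwo hdiag i r
  · exact hd.map_single_of_ne htwo hdiag hij r

theorem map_single_mul_apply_of_ne (hd : IsJordanGHDerivation d d d)
    (htwo : IsSMulRegular R (2 : ℕ)) (hdiag : ∀ i, d (single i i 1) = 0) {i j k : ι}
    (hijk : i ≠ j ∨ i ≠ k) (r s : R) :
    d (single i k (r * s)) i k = d (single i j r) i j * s + r * d (single j k s) j k := by
  have := congr_fun₂ (hd (single i j r) (single j k s)) i k
  rw [hd.map_single htwo hdiag i j, hd.map_single htwo hdiag j k] at this
  rcases eq_or_ne i k with rfl | hik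
  · have hij : i ≠ j := by simpa using hijk
    have hswap : d (single j j (s * r)) i i = 0 := by
      rw [hd.map_single htwo hdiag, single_apply_of_row_ne hij.symm]
    simpa [hij.symm, hswap] using this
  · simpa [hik.symm] using this

theorem map_single_mul_apply [Nontrivial ι] (hd : IsJordanGHDerivation d d d)
    (htwo : IsSMulRegular R (2 : ℕ)) (hdiag : ∀ i, d (single i i 1) = 0) (i j k : ι) (r s : R) :
    d (single i k (r * s)) i k = d (single i j r) i j * s + r * d (single j k s) j k := by
  by_cases hijk : i ≠ j ∨ i ≠ k
  · exact hd.map_single_mul_apply_of_ne htwo hdiag hijk r s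
  · obtain ⟨rfl, rfl⟩ : i = j ∧ i = k := by simpa [not_or] using hijk
    obtain ⟨l, hl⟩ := exists_ne i
    have hil (a b : R) : d (single i l (a * b)) i l
        = d (single i i a) i i * b + a * d (single i l b) i l :=
      hd.map_single_mul_apply_of_ne htwo hdiag (.inr hl.symm) a b
    have hassoc : d (single i i (r * s)) i i * 1 + r * s * d (single i l 1) i l
        = d (single i i r) i i * s
          + r * (d (single i i s) i i * 1 + s * d (single i l 1) i l) := by
      rw [← hil, ← hil, mul_one, mul_one, hil]
    linear_combination (norm := noncomm_ring) hassoc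

theorem isGHDerivation_of_map_single_self_one_eq_zero [Nontrivial ι]
    (hd : IsJordanGHDerivation d d d) (htwo : IsSMulRegular R (2 : ℕ))
    (hdiag : ∀ i, d (single i i 1) = 0) : IsGHDerivation d d d := by
  suffices hleibniz : ∀ M N, d (M * N) = d M * N + M * d N from
    fun M N ↦ ⟨hleibniz M N, hleibniz M N⟩
  intro M N
  induction M using Matrix.induction_on' with
  | h_zero => simp
  | h_add P Q hP hQ => simp only [add_mul, map_add, hP, hQ]; abel
  | h_std_basis i j r =>
    induction N using Matrix.induction_on' with
    | h_zero => simp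
    | h_add P Q hP hQ => simp only [mul_add, map_add, hP, hQ]; abel
    | h_std_basis k l s =>
      rw [hd.map_single htwo hdiag i j, hd.map_single htwo hdiag k l]
      rcases eq_or_ne j k with rfl | hjk
      · rw [single_mul_single_same, single_mul_single_same, single_mul_single_same, ← single_add,
          hd.map_single htwo hdiag, hd.map_single_mul_apply htwo hdiag i j l]
      · simp [hjk]

omit [DecidableEq ι] in
theorem isGHDerivation_self [Nontrivial ι] (hd : IsJordanGHDerivation d d d)
    (htwo : IsSMulRegular R (2 : ℕ)) : IsGHDerivation d d d := by
  classical
  have hinner := isGHDerivation_innerDerivation (diagonalGenerator d)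
  have hsub := (hd.sub hinner.isJordanGHDerivation).isGHDerivation_of_map_single_self_one_eq_zero
    htwo fun i ↦ sub_eq_zero.mpr (hd.map_single_self_one_eq_innerDerivation htwo i)
  simpa only [sub_add_cancel] using hsub.add hinner

end IsJordanGHDerivation

end Matrix

theorem jordan_gh_derivation_is_gh_derivation_of_matrix_general {ι R : Type*} [Fintype ι]
    [Nontrivial ι] [Ring R] (htwo : IsSMulRegular R (2 : ℕ))
    {f g h : Matrix ι ι R →+ Matrix ι ι R} (H : IsJordanGHDerivation f g h) :
    IsGHDerivation f g h := by
  classical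
  obtain ⟨d, hd, b, hb, c, hc, rfl, rfl, rfl⟩ := H.exists_eq_add_mulLeft htwo.matrix
    (H.map_one_mem_center htwo) (H.symm.map_one_mem_center htwo)
  exact (hd.isGHDerivation_self htwo).add (isGHDerivation_mulLeft_of_mem_center hb hc)

/-- **Theorem 3.1.** Every Jordan `{g,h}`-derivation on the full matrix algebra `Mₙ(C)`
(`n ≥ 2`, `C` a 2-torsion free commutative ring with `1 ≠ 0`) is a `{g,h}`-derivation. -/
theorem jordan_gh_derivation_is_gh_derivation_of_matrix
    (C : Type*) [CommRing C] (hone : (1 : C) ≠ 0)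
    (htf : ∀ a : C, a + a = 0 → a = 0)
    (n : ℕ) (hn : 2 ≤ n)
    (f g h : Matrix (Fin n) (Fin n) C →ₗ[C] Matrix (Fin n) (Fin n) C)
    (hJordan : ∀ x y : Matrix (Fin n) (Fin n) C,
      f (x * y + y * x) = (g x * y + y * g x) + (x * h y + h y * x)) :
    ∀ x y : Matrix (Fin n) (Fin n) C,
      f (x * y) = g x * y + x * h y ∧ f (x * y) = h x * y + x * g y := by
  have : Nontrivial (Fin n) := Fin.nontrivial_iff_two_le.mpr hn
  have htwo : IsSMulRegular C (2 : ℕ) :=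
    .of_right_eq_zero_of_smul fun a ha ↦ htf a (two_nsmul a ▸ ha)
  exact jordan_gh_derivation_is_gh_derivation_of_matrix_general htwo
    (f := f.toAddMonoidHom) (g := g.toAddMonoidHom) (h := h.toAddMonoidHom) hJordan
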